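/- If a hypothesis class 𝓗 ⊆ {0,1}^ℕ admits a computable k-witness of VC dimension for some k ∈ ℕ, then 𝓗 is contained in some properly SCPAC learnable hypothesis class 𝓗̂. -/

import Mathlib

/-!
The larger class `avoidClass k w` consists of the hypotheses that avoid, on every increasing
`(k+2)`-tuple, the pattern `w(x₁, …, x_{k+1})` followed by a `1`. It contains every class for
which `w` is a `k`-witness (`subset_avoidClass`), and its VC dimension is at most `k + 1`
(`avoidClass_vcDim`). The trailing `1` makes it closed under truncation: setting a hypothesis to
`0` from some point on creates no new forbidden pattern (`truncate_mem`), and membership of a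
finitely supported hypothesis involves only tuples inside its support bound (`admissible_iff`).
So an empirical risk minimizer for the whole class is found by a finite search over the Boolean
lists as long as the sample points require, and the search is computable because `w` is
(`ermLearner_computable`, `ermLearner_proper`, `ermLearner_countP_le`).

Empirical risk minimization learns a class of finite VC dimension with an explicit sample
complexity (`pac_of_erm`). The core is the one-sided uniform deviation bound
`iidExp_devEvent_le`: the exponential moment of `sup_f m (L_D(f) - L_S(f))` is bounded by
replacing `L_D` with the loss on a ghost sample (Jensen), swapping the two samples coordinatewise
(`pairExp_le_of_swapAvg_le`), and using `cosh t ≤ exp (t² / 2)` for each of the finitely many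
traces on the double sample, which are counted by Sauer–Shelah (`traceBound_loss`). The opposite
deviation is needed only for a single near-optimal hypothesis and is the same bound for the
complementary loss. Since the number of traces is polynomial, `tail_le` gives a sample size that is
polynomial in `n`, hence computable.
-/

open Filter
open scoped ENNReal

/-- A hypothesis is a function `ℕ → Bool` (i.e. an element of `{0,1}^ℕ`). -/
abbrev Hyp := ℕ → Bool

/-- A sample is a finite sequence of labeled examples. -/
abbrev Sample := List (ℕ × Bool)

/-- A learner maps samples to hypotheses. -/
abbrev Learner := Sample → Hyp

/-- Generalization error `L_D(h) = Pr_{(x,y)∼D}[h(x) ≠ y]`. -/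
noncomputable def genError (D : PMF (ℕ × Bool)) (h : Hyp) : ℝ≥0∞ :=
  D.toOuterMeasure {p | h p.1 ≠ p.2}

/-- The distribution of `m` i.i.d. draws from `D`, as a PMF on samples of size `m`. -/
noncomputable def iidPMF (D : PMF (ℕ × Bool)) : ℕ → PMF Sample
  | 0 => PMF.pure []
  | m + 1 => D.bind fun p => (iidPMF D m).map (List.cons p)

/-- `Pr_{S ∼ D^m}[S ∈ E]`. -/
noncomputable def samplePr (D : PMF (ℕ × Bool)) (m : ℕ) (E : Set Sample) : ℝ≥0∞ :=
  (iidPMF D m).toOuterMeasure E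

/-- The PAC inequality for accuracy/confidence parameter `n` and sample size `m`:
for every distribution `D`,
`Pr_{S∼D^m}[L_D(A(S)) ≤ inf_{h∈H} L_D(h) + 1/n] ≥ 1 − 1/n`. -/
def PACCondition (A : Learner) (H : Set Hyp) (n m : ℕ) : Prop :=
  ∀ D : PMF (ℕ × Bool),
    1 - ((n : ℝ≥0∞))⁻¹ ≤
      samplePr D m {S | genError D (A S) ≤ (⨅ h ∈ H, genError D h) + ((n : ℝ≥0∞))⁻¹}

/-- `A` PAC learns `H`. -/
def PACLearns (A : Learner) (H : Set Hyp) : Prop :=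
  ∀ n : ℕ, ∃ m₀ : ℕ, ∀ m ≥ m₀, PACCondition A H n m

/-- The sample complexity of `A` w.r.t. `H`: the minimal `m₀` such that the PAC
inequality for `n` holds for all `m ≥ m₀`. -/
noncomputable def sampleComplexity (A : Learner) (H : Set Hyp) (n : ℕ) : ℕ :=
  sInf {m₀ | ∀ m ≥ m₀, PACCondition A H n m}

/-- A learner is computable if the two-argument function `(S, x) ↦ A(S)(x)` is computable
(equivalently, there is an algorithm producing from `S` a Turing machine computing the
total function `A(S)`). -/
def ComputableLearner (A : Learner) : Prop :=
  Computable₂ fun (S : Sample) (x : ℕ) => A S x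

/-- A learner is proper for `H` if it only outputs hypotheses from `H`. -/
def ProperFor (A : Learner) (H : Set Hyp) : Prop := ∀ S, A S ∈ H

/-- `H` is CPAC learnable: some computable learner PAC learns it. -/
def CPACLearnable (H : Set Hyp) : Prop :=
  ∃ A : Learner, ComputableLearner A ∧ PACLearns A H

/-- `H` is properly CPAC learnable. -/
def ProperlyCPACLearnable (H : Set Hyp) : Prop :=
  ∃ A : Learner, ComputableLearner A ∧ ProperFor A H ∧ PACLearns A H

/-- `H` is SCPAC learnable: some computable learner PAC learns it with sample complexity
bounded by a total computable function. -/
def SCPACLearnable (H : Set Hyp) : Prop :=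
  ∃ A : Learner, ComputableLearner A ∧ PACLearns A H ∧
    ∃ g : ℕ → ℕ, Computable g ∧ ∀ n, sampleComplexity A H n ≤ g n

/-- `H` is properly SCPAC learnable. -/
def ProperlySCPACLearnable (H : Set Hyp) : Prop :=
  ∃ A : Learner, ComputableLearner A ∧ ProperFor A H ∧ PACLearns A H ∧
    ∃ g : ℕ → ℕ, Computable g ∧ ∀ n, sampleComplexity A H n ≤ g n

/-- Empirical error `L_S(h) = |{i : h(x_i) ≠ y_i}| / |S|`. -/
noncomputable def empError (S : Sample) (h : Hyp) : ℝ≥0∞ :=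
  ((S.countP fun p => h p.1 != p.2 : ℕ) : ℝ≥0∞) / (S.length : ℝ≥0∞)

/-- `A` is an ERM for `H`: on every sample it outputs a hypothesis of `H` minimizing
the empirical error over `H`. -/
def IsERM (A : Learner) (H : Set Hyp) : Prop :=
  ∀ S : Sample, A S ∈ H ∧ ∀ h ∈ H, empError S (A S) ≤ empError S h

/-- `A` is an asymptotic ERM for `H`. -/
def IsAsymptoticERM (A : Learner) (H : Set Hyp) : Prop :=
  ProperFor A H ∧
  ∃ ε : ℕ → ℝ≥0∞, (∀ m, ε m ≤ 1) ∧ Tendsto ε atTop (nhds 0) ∧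
    ∀ S : Sample, empError S (A S) ≤ (⨅ h ∈ H, empError S h) + ε S.length

/-- `H` shatters the finite set `s`. -/
def Shatters (H : Set Hyp) (s : Finset ℕ) : Prop :=
  ∀ g : ℕ → Bool, ∃ h ∈ H, ∀ x ∈ s, h x = g x

/-- The VC dimension of `H` is at most `d`. -/
def VCDimAtMost (H : Set Hyp) (d : ℕ) : Prop :=
  ∀ s : Finset ℕ, Shatters H s → s.card ≤ d

/-- `H` has finite VC dimension. -/
def FiniteVCDim (H : Set Hyp) : Prop := ∃ d, VCDimAtMost H d

/-- `w` is a `k`-witness of VC dimension for `H`: on every increasing `(k+1)`-tuple it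
produces a Boolean `(k+1)`-tuple which is not the trace of any `h ∈ H` on the tuple. -/
def IsKWitness (k : ℕ) (w : List ℕ → List Bool) (H : Set Hyp) : Prop :=
  ∀ xs : List ℕ, xs.length = k + 1 → xs.Chain' (· < ·) →
    (w xs).length = k + 1 ∧ ∀ h ∈ H, xs.map h ≠ w xs

/-- The support of a hypothesis: `h⁻¹(1)`. -/
def hypSupport (h : Hyp) : Set ℕ := {x | h x = true}

/-- `h` is finitely supported. -/
def FinitelySupported (h : Hyp) : Prop := (hypSupport h).Finite

/-- The finitely supported hypothesis with support (the set of elements of) `l`. -/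
def listIndicator (l : List ℕ) : Hyp := fun x => decide (x ∈ l)

/-- A class of finitely supported hypotheses is decidable: there is an algorithm that,
given the support of a finitely supported `h` (as a list), decides whether `h ∈ H`. -/
def DecidableClass (H : Set Hyp) : Prop :=
  ∃ d : List ℕ → Bool, Computable d ∧ ∀ l : List ℕ, (d l = true ↔ listIndicator l ∈ H)

/-- `H` shatters the full binary tree of depth `d` whose node at binary path `p`
(with `|p| < d`) is labeled `t p`: every leaf (a binary path of length `d`) is reached
by some `h ∈ H`, going right at a node labeled `x` iff `h x = 1`. -/
def ShattersTree (H : Set Hyp) (d : ℕ) (t : List Bool → ℕ) : Prop :=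
  ∀ l : List Bool, l.length = d →
    ∃ h ∈ H, ∀ (i : ℕ) (hi : i < l.length), l[i] = h (t (l.take i))

/-! ### The class `𝓗_f` -/

/-- The `j`-th smallest element of the `k`-th block `I_k` of positive even numbers
(`1 ≤ j ≤ k`): `n_{kj} = k(k-1) + 2j`. -/
def nkj (k j : ℕ) : ℕ := k * (k - 1) + 2 * j

/-- The block `I_k` (of size `k`). -/
def Iblk (k : ℕ) : Finset ℕ := (Finset.Icc 1 k).image (nkj k)

/-- `h_{kj}`: the indicator of `I_k \ {n_{kj}}`. -/
def hkj (k j : ℕ) : Hyp := fun n => decide (n ∈ Iblk k ∧ n ≠ nkj k j)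

/-- `h_a`: the indicator of `I_{f(a)} ∪ {2a+1}`. -/
def hA (f : ℕ → ℕ) (a : ℕ) : Hyp := fun n => decide (n ∈ Iblk (f a) ∨ n = 2 * a + 1)

/-- The class `𝓗_f = {h_{kj} : 1 ≤ j ≤ k} ∪ {h_a : a ∈ ℕ}`. -/
def Hf (f : ℕ → ℕ) : Set Hyp :=
  {h | ∃ k j, 1 ≤ j ∧ j ≤ k ∧ h = hkj k j} ∪ {h | ∃ a, h = hA f a}

/-! ### Good hypotheses w.r.t. a witness -/

/-- `h` is good w.r.t. the `k`-witness `w`: it has finite support and disagrees with `w`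
on every increasing `(k+1)`-tuple lying strictly below `max supp(h)`. -/
def IsGood (k : ℕ) (w : List ℕ → List Bool) (h : Hyp) : Prop :=
  FinitelySupported h ∧
  ∀ xs : List ℕ, xs.length = k + 1 → xs.Chain' (· < ·) →
    (∀ x ∈ xs, x < sSup (hypSupport h)) → xs.map h ≠ w xs

/-- The set of good hypotheses w.r.t. `w`. -/
def Hgood (k : ℕ) (w : List ℕ → List Bool) : Set Hyp := {h | IsGood k w h}
/-! ### Expectations over i.i.d. samples -/

/-- The expectation of `φ` over `m` i.i.d. draws from `D`, by recursion on the first draw. -/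
noncomputable def iidExp {Z : Type*} (D : PMF Z) : ℕ → (List Z → ℝ≥0∞) → ℝ≥0∞
  | 0, φ => φ []
  | m + 1, φ => ∑' z, D z * iidExp D m (fun S => φ (z :: S))

theorem iidExp_mono {Z : Type*} (D : PMF Z) (m : ℕ) (φ ψ : List Z → ℝ≥0∞)
    (h : ∀ S, S.length = m → φ S ≤ ψ S) : iidExp D m φ ≤ iidExp D m ψ := by
  induction m generalizing φ ψ with
  | zero => exact h [] rfl
  | succ m ih =>
    refine ENNReal.tsum_le_tsum fun z => mul_le_mul_right (ih _ _ fun S hS => h _ ?_) _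
    simp [hS]

theorem iidExp_tsum {Z ι : Type*} (D : PMF Z) (m : ℕ) (c : ι → ℝ≥0∞)
    (φ : ι → List Z → ℝ≥0∞) :
    iidExp D m (fun S => ∑' i, c i * φ i S) = ∑' i, c i * iidExp D m (φ i) := by
  induction m generalizing φ with
  | zero => rfl
  | succ m ih =>
    simp only [iidExp, ih, ← ENNReal.tsum_mul_left]
    rw [ENNReal.tsum_comm]
    simp only [mul_left_comm]

theorem iidExp_const_mul {Z : Type*} (D : PMF Z) (m : ℕ) (c : ℝ≥0∞) (φ : List Z → ℝ≥0∞) :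
    iidExp D m (fun S => c * φ S) = c * iidExp D m φ := by
  simpa using iidExp_tsum D m (fun _ : Unit => c) (fun _ => φ)

theorem iidExp_add {Z : Type*} (D : PMF Z) (m : ℕ) (φ ψ : List Z → ℝ≥0∞) :
    iidExp D m (fun S => φ S + ψ S) = iidExp D m φ + iidExp D m ψ := by
  simpa using iidExp_tsum D m (fun _ : Bool => 1) (fun b => if b then φ else ψ)

theorem iidExp_prod {Z : Type*} (D : PMF Z) (m : ℕ) (u : Z → ℝ≥0∞) :
    iidExp D m (fun S => (S.map u).prod) = (∑' z, D z * u z) ^ m := by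
  induction m with
  | zero => simp [iidExp]
  | succ m ih =>
    simp only [iidExp, List.map_cons, List.prod_cons, iidExp_const_mul, ih, pow_succ',
      ← ENNReal.tsum_mul_right, mul_assoc]

theorem iidExp_one {Z : Type*} (D : PMF Z) (m : ℕ) : iidExp D m (fun _ => 1) = 1 := by
  simpa [D.tsum_coe] using iidExp_prod D m (fun _ => 1)

theorem samplePr_eq_iidExp (D : PMF (ℕ × Bool)) (m : ℕ) (E : Set Sample) :
    samplePr D m E = iidExp D m (E.indicator 1) := by
  unfold samplePr
  induction m generalizing E with
  | zero =>
    classical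
    simp [iidPMF, iidExp, PMF.toOuterMeasure_pure_apply, Set.indicator_apply]
  | succ m ih =>
    simp only [iidPMF, iidExp, PMF.toOuterMeasure_bind_apply, PMF.toOuterMeasure_map_apply, ih]
    rfl

/-! ### Symmetrization -/

/-- The expectation of `G` over `m` i.i.d. draws of pairs from `D × D`. -/
noncomputable def pairExp {Z : Type*} (D : PMF Z) : ℕ → (List (Z × Z) → ℝ≥0∞) → ℝ≥0∞
  | 0, G => G []
  | m + 1, G => ∑' z, ∑' z', D z * (D z' * pairExp D m (fun R => G ((z, z') :: R)))

theorem iidExp_iidExp_zip {Z : Type*} (D : PMF Z) (m : ℕ) (G : List (Z × Z) → ℝ≥0∞) :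
    iidExp D m (fun S => iidExp D m (fun S' => G (S.zip S'))) = pairExp D m G := by
  induction m generalizing G with
  | zero => rfl
  | succ m ih =>
    have ih' : ∀ z z', iidExp D m (fun S => iidExp D m (fun S' => G ((z, z') :: S.zip S'))) =
        pairExp D m (fun R => G ((z, z') :: R)) := fun z z' =>
      ih (fun R => G ((z, z') :: R))
    simp only [iidExp, List.zip_cons_cons, iidExp_tsum, pairExp, ENNReal.tsum_mul_left, ih']

theorem pairExp_add {Z : Type*} (D : PMF Z) (m : ℕ) (G G' : List (Z × Z) → ℝ≥0∞) :
    pairExp D m (fun R => G R + G' R) = pairExp D m G + pairExp D m G' := by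
  simp only [← iidExp_iidExp_zip, iidExp_add]

theorem pairExp_div_two {Z : Type*} (D : PMF Z) (m : ℕ) (G : List (Z × Z) → ℝ≥0∞) :
    pairExp D m (fun R => G R / 2) = pairExp D m G / 2 := by
  simp only [← iidExp_iidExp_zip, div_eq_mul_inv, mul_comm _ (2⁻¹ : ℝ≥0∞), iidExp_const_mul]

/-- The average of `G` over the `2 ^ |Q|` lists obtained from `Q` by independently swapping,
or not, the two components of each pair. -/
noncomputable def swapAvg {Z : Type*} : List (Z × Z) → (List (Z × Z) → ℝ≥0∞) → ℝ≥0∞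
  | [], G => G []
  | q :: Q, G => swapAvg Q (fun R => (G (q :: R) + G (q.swap :: R)) / 2)

/-- Swapping the components of a `D × D`-distributed pair does not change its law, so a bound
on all swap averages bounds the expectation. -/
theorem pairExp_le_of_swapAvg_le {Z : Type*} (D : PMF Z) (m : ℕ) (G : List (Z × Z) → ℝ≥0∞)
    (B : ℝ≥0∞) (h : ∀ Q : List (Z × Z), Q.length = m → swapAvg Q G ≤ B) :
    pairExp D m G ≤ B := by
  induction m generalizing G with
  | zero => exact h [] rfl
  | succ m ih =>
    have hsymm : pairExp D (m + 1) G = ∑' z, ∑' z', D z * (D z' *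
        pairExp D m (fun R => (G ((z, z') :: R) + G ((z, z').swap :: R)) / 2)) := by
      have h0 : ∀ z z', pairExp D m (fun R => (G ((z, z') :: R) + G ((z, z').swap :: R)) / 2) =
          pairExp D m (fun R => G ((z, z') :: R)) * 2⁻¹ +
            pairExp D m (fun R => G ((z', z) :: R)) * 2⁻¹ := by
        intro z z'
        rw [pairExp_div_two, pairExp_add, div_eq_mul_inv, add_mul, Prod.swap_prod_mk]
      simp only [h0, mul_add, ENNReal.tsum_add]
      have h1 : ∀ (a : Z → Z → ℝ≥0∞), (∑' z, ∑' z', D z * (D z' * (a z z' * 2⁻¹)))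
          = (∑' z, ∑' z', D z * (D z' * a z z')) * 2⁻¹ := by
        intro a
        simp only [← ENNReal.tsum_mul_right, mul_assoc]
      rw [h1, h1, ENNReal.tsum_comm (f := fun z z' =>
        D z * (D z' * pairExp D m (fun R => G ((z', z) :: R))))]
      simp only [mul_left_comm (D _) (D _)]
      rw [← mul_add, ENNReal.inv_two_add_inv_two, mul_one]
      simp only [pairExp]
    rw [hsymm]
    calc _ ≤ ∑' z, ∑' z', D z * (D z' * B) := by
          refine ENNReal.tsum_le_tsum fun z => ENNReal.tsum_le_tsum fun z' => ?_
          gcongr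
          exact ih _ fun Q hQ => h ((z, z') :: Q) (by simp [hQ])
      _ = B := by
          simp only [ENNReal.tsum_mul_left, ENNReal.tsum_mul_right, D.tsum_coe, one_mul]

theorem swapAvg_mono {Z : Type*} (Q : List (Z × Z)) (G G' : List (Z × Z) → ℝ≥0∞)
    (h : ∀ R, List.Forall₂ (fun q r => r = q ∨ r = q.swap) Q R → G R ≤ G' R) :
    swapAvg Q G ≤ swapAvg Q G' := by
  induction Q generalizing G G' with
  | nil => exact h [] .nil
  | cons q Q ih =>
    refine ih _ _ fun R hR => ?_
    have h1 := h (q :: R) (.cons (.inl rfl) hR)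
    have h2 := h (q.swap :: R) (.cons (.inr rfl) hR)
    gcongr

theorem swapAvg_finsetSum {Z ι : Type*} (Q : List (Z × Z)) (T : Finset ι)
    (G : ι → List (Z × Z) → ℝ≥0∞) :
    swapAvg Q (fun R => ∑ i ∈ T, G i R) = ∑ i ∈ T, swapAvg Q (G i) := by
  induction Q generalizing G with
  | nil => rfl
  | cons q Q ih =>
    simp only [swapAvg, ← ih, ← Finset.sum_add_distrib, div_eq_mul_inv, Finset.sum_mul]

/-- The average of a product over pairs that are swapped independently is at most the
product of the bounds for the single pairs. -/
theorem swapAvg_prod_le {Z : Type*} (Q : List (Z × Z)) (u : Z × Z → ℝ≥0∞) (c b : ℝ≥0∞)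
    (hu : ∀ q, (u q + u q.swap) / 2 ≤ c) :
    swapAvg Q (fun R => b * (R.map u).prod) ≤ b * c ^ Q.length := by
  induction Q generalizing b with
  | nil => simp [swapAvg]
  | cons q Q ih =>
    have h : ∀ R : List (Z × Z), (b * ((q :: R).map u).prod + b * ((q.swap :: R).map u).prod) / 2
        = (b * ((u q + u q.swap) / 2)) * (R.map u).prod := by
      intro R
      simp only [List.map_cons, List.prod_cons, div_eq_mul_inv]
      ring
    simp only [swapAvg, h]
    refine (ih _).trans ?_
    rw [List.length_cons, pow_succ', mul_assoc]
    gcongr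
    exact hu q

/-! ### Exponential deviation bound -/

/-- The risk `Pr_{z∼D}[f z = true]` of a loss function `f`. -/
noncomputable def risk {Z : Type*} (D : PMF Z) (f : Z → Bool) : ℝ :=
  (D.toOuterMeasure {z | f z = true}).toReal

theorem prob_ne_top {Z : Type*} (D : PMF Z) (s : Set Z) : D.toOuterMeasure s ≠ ⊤ := by
  refine ne_top_of_le_ne_top ENNReal.one_ne_top ?_
  rw [PMF.toOuterMeasure_apply, ← D.tsum_coe]
  exact ENNReal.tsum_le_tsum fun z => Set.indicator_le_self _ _ _

theorem prob_add_compl {Z : Type*} (D : PMF Z) (f : Z → Bool) :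
    D.toOuterMeasure {z | f z = true} + D.toOuterMeasure {z | f z = false} = 1 := by
  rw [PMF.toOuterMeasure_apply, PMF.toOuterMeasure_apply, ← ENNReal.tsum_add, ← D.tsum_coe]
  refine tsum_congr fun z => ?_
  cases h : f z <;> simp [h]

theorem risk_not {Z : Type*} (D : PMF Z) (f : Z → Bool) :
    risk D (fun z => !f z) = 1 - risk D f := by
  have h := congrArg ENNReal.toReal (prob_add_compl D f)
  rw [ENNReal.toReal_add (prob_ne_top _ _) (prob_ne_top _ _), ENNReal.toReal_one] at h
  simp only [risk, Bool.not_eq_true']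
  linarith

theorem risk_nonneg {Z : Type*} (D : PMF Z) (f : Z → Bool) : 0 ≤ risk D f :=
  ENNReal.toReal_nonneg

theorem risk_le_one {Z : Type*} (D : PMF Z) (f : Z → Bool) : risk D f ≤ 1 := by
  have := risk_nonneg D (fun z => !f z)
  rw [risk_not] at this
  linarith

/-- Jensen's inequality for `exp` and a `{0,1}`-valued random variable. -/
theorem exp_risk_le {Z : Type*} (D : PMF Z) (f : Z → Bool) (t : ℝ) :
    ENNReal.ofReal (Real.exp (t * risk D f)) ≤
      ∑' z, D z * ENNReal.ofReal (Real.exp (t * (f z).toNat)) := by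
  have h1 : ∑' z, D z * ENNReal.ofReal (Real.exp (t * (f z).toNat)) =
      D.toOuterMeasure {z | f z = true} * ENNReal.ofReal (Real.exp t) +
        D.toOuterMeasure {z | f z = false} := by
    rw [PMF.toOuterMeasure_apply, PMF.toOuterMeasure_apply, ← ENNReal.tsum_mul_right,
      ← ENNReal.tsum_add]
    refine tsum_congr fun z => ?_
    cases h : f z <;> simp [h]
  have h2 : D.toOuterMeasure {z | f z = true} = ENNReal.ofReal (risk D f) :=
    (ENNReal.ofReal_toReal (prob_ne_top _ _)).symm
  have h3 : D.toOuterMeasure {z | f z = false} = ENNReal.ofReal (1 - risk D f) := by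
    rw [← risk_not, risk, ENNReal.ofReal_toReal (prob_ne_top _ _)]
    simp
  have hp := risk_nonneg D f
  have hp' := risk_le_one D f
  rw [h1, h2, h3, ← ENNReal.ofReal_mul hp, ← ENNReal.ofReal_add (by positivity) (by linarith)]
  apply ENNReal.ofReal_le_ofReal
  have := convexOn_exp.2 (Set.mem_univ t) (Set.mem_univ 0) hp (sub_nonneg.2 hp') (by ring)
  simpa [mul_comm] using this

theorem ofReal_exp_mul_countP {Z : Type*} (f : Z → Bool) (t : ℝ) (S : List Z) :
    ENNReal.ofReal (Real.exp (t * S.countP f)) =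
      (S.map fun z => ENNReal.ofReal (Real.exp (t * (f z).toNat))).prod := by
  induction S with
  | nil => simp
  | cons z S ih =>
    rw [List.map_cons, List.prod_cons, ← ih, ← ENNReal.ofReal_mul (Real.exp_nonneg _),
      ← Real.exp_add, List.countP_cons]
    cases h : f z <;> simp [mul_add, add_comm]

/-- `exp (t (f z' - f z))`, the factor contributed by a pair `(z, z')`. -/
noncomputable def pairWeight {Z : Type*} (t : ℝ) (f : Z → Bool) (q : Z × Z) : ℝ≥0∞ :=
  ENNReal.ofReal (Real.exp (-t * (f q.1).toNat)) * ENNReal.ofReal (Real.exp (t * (f q.2).toNat))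

theorem pairWeight_swap_le {Z : Type*} (t : ℝ) (f : Z → Bool) (q : Z × Z) :
    (pairWeight t f q + pairWeight t f q.swap) / 2 ≤ ENNReal.ofReal (Real.exp (t ^ 2 / 2)) := by
  have h2 : (2 : ℝ≥0∞) = ENNReal.ofReal 2 := by simp
  simp only [pairWeight, Prod.fst_swap, Prod.snd_swap]
  rw [← ENNReal.ofReal_mul (Real.exp_nonneg _), ← ENNReal.ofReal_mul (Real.exp_nonneg _),
    ← Real.exp_add, ← Real.exp_add, ← ENNReal.ofReal_add (Real.exp_nonneg _) (Real.exp_nonneg _),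
    h2, ← ENNReal.ofReal_div_of_pos two_pos]
  apply ENNReal.ofReal_le_ofReal
  have h1 : (1 : ℝ) ≤ Real.exp (t ^ 2 / 2) := Real.one_le_exp (by positivity)
  have hc := Real.cosh_le_exp_half_sq t
  rw [Real.cosh_eq] at hc
  cases f q.1 <;> cases f q.2 <;> simp [-Real.one_le_exp_iff] <;> linarith

/-- The class `F` has at most `N` traces on every `n`-tuple of points, expressed by a finite
set of representatives. -/
def TraceBound {Z : Type*} (F : Set (Z → Bool)) (n N : ℕ) : Prop :=
  ∀ P : List Z, P.length = n → ∃ T : Finset (Z → Bool), T.card ≤ N ∧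
    ∀ f ∈ F, ∃ g ∈ T, ∀ z ∈ P, g z = f z

/-- Exponential moment of the uniform deviation. The risk is replaced by the empirical count on
an independent ghost sample (Jensen), and the resulting double sample is symmetrized; once the
points are fixed, the supremum is a maximum over at most `N` traces. -/
theorem iidExp_sup_le {Z : Type*} (D : PMF Z) (F : Set (Z → Bool)) (m N : ℕ) (t : ℝ)
    (hF : TraceBound F (2 * m) N) :
    iidExp D m (fun S => ⨆ f ∈ F, ENNReal.ofReal (Real.exp (t * (m * risk D f - S.countP f))))
      ≤ N * ENNReal.ofReal (Real.exp (t ^ 2 / 2)) ^ m := by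
  have ghost : ∀ S : List Z, S.length = m →
      (⨆ f ∈ F, ENNReal.ofReal (Real.exp (t * (m * risk D f - S.countP f)))) ≤
        iidExp D m (fun S' => ⨆ f ∈ F, ((S.zip S').map (pairWeight t f)).prod) := by
    intro S hS
    refine iSup₂_le fun f hf => ?_
    have hzip : ∀ S' : List Z, S'.length = m → ((S.zip S').map (pairWeight t f)).prod =
        ENNReal.ofReal (Real.exp (-t * S.countP f)) *
          (S'.map fun z => ENNReal.ofReal (Real.exp (t * (f z).toNat))).prod := by
      intro S' hS'
      rw [ofReal_exp_mul_countP]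
      clear * - hS hS'
      induction S generalizing S' m with
      | nil =>
        obtain rfl : S' = [] := List.length_eq_zero_iff.1 (by simp_all)
        simp
      | cons z S ih =>
        obtain _ | ⟨z', S'⟩ := S'
        · simp only [List.length_nil, List.length_cons] at hS hS'
          omega
        · simp only [List.length_cons] at hS hS'
          have := ih S.length rfl S' (by omega)
          simp only [List.zip_cons_cons, List.map_cons, List.prod_cons, this, pairWeight]
          ring
    calc ENNReal.ofReal (Real.exp (t * (m * risk D f - S.countP f)))
        = ENNReal.ofReal (Real.exp (-t * S.countP f)) *
            ENNReal.ofReal (Real.exp (t * risk D f)) ^ m := by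
          rw [← ENNReal.ofReal_pow (Real.exp_nonneg _), ← Real.exp_nat_mul,
            ← ENNReal.ofReal_mul (Real.exp_nonneg _), ← Real.exp_add]
          congr 2
          ring
      _ ≤ ENNReal.ofReal (Real.exp (-t * S.countP f)) *
            (∑' z, D z * ENNReal.ofReal (Real.exp (t * (f z).toNat))) ^ m := by
          gcongr
          exact exp_risk_le D f t
      _ = iidExp D m (fun S' => ENNReal.ofReal (Real.exp (-t * S.countP f)) *
            (S'.map fun z => ENNReal.ofReal (Real.exp (t * (f z).toNat))).prod) := by
          rw [iidExp_const_mul, iidExp_prod]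
      _ ≤ _ := by
          refine iidExp_mono _ _ _ _ fun S' hS' => ?_
          rw [← hzip S' hS']
          exact le_iSup₂_of_le f hf le_rfl
  refine (iidExp_mono _ _ _ _ ghost).trans ?_
  rw [iidExp_iidExp_zip D m (fun R => ⨆ f ∈ F, (R.map (pairWeight t f)).prod)]
  refine pairExp_le_of_swapAvg_le _ _ _ _ fun Q hQ => ?_
  obtain ⟨T, hT, hcov⟩ := hF (Q.map Prod.fst ++ Q.map Prod.snd) (by simp [hQ]; ring)
  calc _ ≤ swapAvg Q (fun R => ∑ g ∈ T, 1 * (R.map (pairWeight t g)).prod) := by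
        refine swapAvg_mono _ _ _ fun R hR => iSup₂_le fun f hf => ?_
        obtain ⟨g, hg, hgf⟩ := hcov f hf
        have hRf : R.map (pairWeight t f) = R.map (pairWeight t g) := by
          refine List.map_congr_left fun r hr => ?_
          have hmem : ∃ q ∈ Q, r = q ∨ r = q.swap := by
            clear * - hR hr
            induction hR with
            | nil => simp at hr
            | cons h _ ih =>
              rcases List.mem_cons.1 hr with rfl | hr
              · exact ⟨_, List.mem_cons_self, h⟩
              · obtain ⟨q, hq, h⟩ := ih hr
                exact ⟨q, List.mem_cons_of_mem _ hq, h⟩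
          obtain ⟨q, hq, hr⟩ := hmem
          have h1 := hgf q.1 (List.mem_append_left _ (List.mem_map_of_mem hq))
          have h2 := hgf q.2 (List.mem_append_right _ (List.mem_map_of_mem hq))
          rcases hr with rfl | rfl <;> simp [pairWeight, h1, h2]
        rw [hRf]
        simpa using Finset.single_le_sum
          (f := fun g => (R.map (pairWeight t g)).prod) (fun _ _ => zero_le) hg
    _ ≤ ∑ g ∈ T, ENNReal.ofReal (Real.exp (t ^ 2 / 2)) ^ m := by
        rw [swapAvg_finsetSum]
        refine Finset.sum_le_sum fun g _ => ?_
        simpa [hQ] using swapAvg_prod_le Q (pairWeight t g) _ 1 (pairWeight_swap_le t g)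
    _ ≤ _ := by
        rw [Finset.sum_const, nsmul_eq_mul]
        gcongr

/-- For samples of size `m`, the event that some `f ∈ F` has a risk exceeding its empirical risk
by at least `ε`. The length of the sample is not part of the definition. -/
def devEvent {Z : Type*} (D : PMF Z) (F : Set (Z → Bool)) (m : ℕ) (ε : ℝ) : Set (List Z) :=
  {S | ∃ f ∈ F, S.countP f + m * ε ≤ m * risk D f}

/-- Chernoff bound: Markov's inequality applied to `iidExp_sup_le`, with the optimal `t = ε`. -/
theorem iidExp_devEvent_le {Z : Type*} (D : PMF Z) (F : Set (Z → Bool)) (m N : ℕ) (ε : ℝ)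
    (hε : 0 ≤ ε) (hF : TraceBound F (2 * m) N) :
    iidExp D m ((devEvent D F m ε).indicator 1)
      ≤ N * ENNReal.ofReal (Real.exp (-(m * ε ^ 2 / 2))) := by
  have key : iidExp D m ((devEvent D F m ε).indicator 1) ≤
      iidExp D m (fun S => ENNReal.ofReal (Real.exp (-(m * ε ^ 2))) *
        ⨆ f ∈ F, ENNReal.ofReal (Real.exp (ε * (m * risk D f - S.countP f)))) := by
    refine iidExp_mono _ _ _ _ fun S _ => ?_
    by_cases hS : S ∈ devEvent D F m ε
    · obtain ⟨f, hf, h⟩ := id hS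
      rw [Set.indicator_of_mem hS]
      refine le_trans ?_ (mul_le_mul_right (le_iSup₂_of_le f hf le_rfl) _)
      rw [← ENNReal.ofReal_mul (Real.exp_nonneg _), ← Real.exp_add, Pi.one_apply,
        ← ENNReal.ofReal_one]
      apply ENNReal.ofReal_le_ofReal
      apply Real.one_le_exp
      nlinarith
    · simp [Set.indicator_of_notMem hS]
  refine key.trans ?_
  rw [iidExp_const_mul]
  refine (mul_le_mul_right (iidExp_sup_le D F m N ε hF) _).trans (le_of_eq ?_)
  rw [mul_left_comm, ← ENNReal.ofReal_pow (Real.exp_nonneg _), ← Real.exp_nat_mul,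
    ← ENNReal.ofReal_mul (Real.exp_nonneg _), ← Real.exp_add]
  congr 3
  ring

/-! ### The class avoiding the extended witness -/

/-- The hypotheses that avoid, on every increasing `(k+2)`-tuple `zs`, the pattern made of the
value of `w` on the first `k+1` points followed by a `1`. -/
def avoidClass (k : ℕ) (w : List ℕ → List Bool) : Set Hyp :=
  {h | ∀ zs : List ℕ, zs.length = k + 2 → zs.Pairwise (· < ·) →
    zs.map h ≠ w (zs.take (k + 1)) ++ [true]}

theorem subset_avoidClass {H : Set Hyp} {k : ℕ} {w : List ℕ → List Bool}
    (hwit : IsKWitness k w H) : H ⊆ avoidClass k w := by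
  intro h hh zs hlen hzs heq
  obtain ⟨hw, hne⟩ := hwit (zs.take (k + 1)) (by simp [hlen])
    (List.isChain_iff_pairwise.2 (hzs.sublist (List.take_sublist _ _)))
  refine hne h hh ?_
  rw [List.map_take, heq, List.take_left' hw]

theorem avoidClass_vcDim {H : Set Hyp} {k : ℕ} {w : List ℕ → List Bool}
    (hwit : IsKWitness k w H) : VCDimAtMost (avoidClass k w) (k + 1) := by
  intro s hs
  by_contra! hcard
  set zs := (s.sort (· ≤ ·)).take (k + 2) with hzs
  have hlen : zs.length = k + 2 := by simp [hzs]; omega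
  have hpw : zs.Pairwise (· < ·) :=
    (Finset.sortedLT_sort s).pairwise.sublist (List.take_sublist _ _)
  have hmem : ∀ x ∈ zs, x ∈ s := fun x hx =>
    (Finset.mem_sort (· ≤ ·)).1 (List.mem_of_mem_take hx)
  have hwlen := (hwit (zs.take (k + 1)) (by simp [hlen])
    (List.isChain_iff_pairwise.2 (hpw.sublist (List.take_sublist _ _)))).1
  set v := w (zs.take (k + 1)) ++ [true] with hv
  have hvlen : v.length = k + 2 := by simp [hv, hwlen]
  obtain ⟨h, hh, heq⟩ := hs fun x => v.getD (zs.idxOf x) false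
  refine hh zs hlen hpw (List.ext_getElem (by simp [hlen, hwlen]) fun i hi _ => ?_)
  have hi' : i < zs.length := by simpa using hi
  have hnd : zs.Nodup := hpw.imp fun h => h.ne
  rw [List.getElem_map, heq _ (hmem _ (List.getElem_mem hi')), hnd.idxOf_getElem i hi',
    List.getD_eq_getElem _ _ (by omega)]

/-- The hypothesis supported on `[0, l.length)` with values `l`. -/
def bitHyp (l : List Bool) : Hyp := fun x => l.getD x false

/-- For `bitHyp l`, a forbidden pattern can only occur inside `[0, l.length)`: its last entry
is `1`. -/
theorem lt_length_of_bad {l : List Bool} {zs : List ℕ} {v : List Bool}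
    (hzs : zs.Pairwise (· < ·)) (h : zs.map (bitHyp l) = v ++ [true]) :
    ∀ x ∈ zs, x < l.length := by
  obtain ⟨xs, ys, rfl, -, hys⟩ := List.map_eq_append_iff.1 h
  obtain ⟨y, rfl, hy⟩ : ∃ y, ys = [y] ∧ bitHyp l y = true := by
    obtain ⟨y, t, rfl, hy, ht⟩ := List.map_eq_cons_iff.1 hys
    exact ⟨y, by simpa using ht, hy⟩
  have hyl : y < l.length := by
    by_contra! hle
    have hfalse : bitHyp l y = false := List.getD_eq_default _ _ hle
    simp [hfalse] at hy
  intro x hx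
  rcases List.mem_append.1 hx with hx | hx
  · exact ((List.pairwise_append.1 hzs).2.2 x hx y (by simp)).trans hyl
  · rwa [List.mem_singleton.1 hx]

theorem bitHyp_map_range {h : Hyp} {M x : ℕ} (hx : x < M) :
    bitHyp ((List.range M).map h) x = h x := by
  simp [bitHyp, hx]

theorem truncate_mem {k : ℕ} {w : List ℕ → List Bool} {h : Hyp} (hh : h ∈ avoidClass k w)
    (M : ℕ) : bitHyp ((List.range M).map h) ∈ avoidClass k w := by
  intro zs hlen hzs heq
  have hlt := lt_length_of_bad hzs heq
  refine hh zs hlen hzs (Eq.trans (List.map_congr_left fun x hx => ?_) heq)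
  exact (bitHyp_map_range (by simpa using hlt x hx)).symm

/-! ### Trace counting -/

/-- The zero-one loss of `h` on a labeled example. -/
def loss (h : Hyp) : ℕ × Bool → Bool := fun p => h p.1 != p.2

/-- Sauer–Shelah for the loss class, with the crude bound `∑_{i ≤ d} C(n, i) ≤ (d + 1) n ^ d`. -/
theorem traceBound_loss {H : Set Hyp} {d : ℕ} (hvc : VCDimAtMost H d) {n : ℕ} (hn : 1 ≤ n) :
    TraceBound (loss '' H) n ((d + 1) * n ^ d) := by
  classical
  intro P hP
  set X : Finset ℕ := (P.map Prod.fst).toFinset with hX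
  have hXcard : X.card ≤ n := (List.toFinset_card_le _).trans (by simp [hP])
  set 𝒜 : Finset (Finset ℕ) :=
    X.powerset.filter fun T => ∃ h ∈ H, T = X.filter fun x => h x = true with h𝒜
  have hshat : 𝒜.shatterer ⊆ (Finset.range (d + 1)).biUnion fun i => X.powersetCard i := by
    intro s hs
    rw [Finset.mem_shatterer] at hs
    have hsX : s ⊆ X := by
      obtain ⟨u, hu, hsu⟩ := hs (Finset.Subset.refl s)
      exact (Finset.inter_eq_left.1 hsu).trans
        (Finset.mem_powerset.1 (Finset.mem_filter.1 hu).1)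
    have hsd : s.card ≤ d := by
      refine hvc s fun g => ?_
      obtain ⟨u, hu, hsu⟩ := hs (Finset.filter_subset (fun x => g x = true) s)
      obtain ⟨h, hh, rfl⟩ := (Finset.mem_filter.1 hu).2
      refine ⟨h, hh, fun x hx => ?_⟩
      have := congrArg (x ∈ ·) hsu
      simp only [Finset.mem_inter, Finset.mem_filter, hx, hsX hx, true_and, eq_iff_iff] at this
      exact Bool.eq_iff_iff.2 this
    simp only [Finset.mem_biUnion, Finset.mem_range, Finset.mem_powersetCard]
    exact ⟨s.card, by omega, hsX, rfl⟩
  have hcard : 𝒜.card ≤ (d + 1) * n ^ d := calc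
    𝒜.card ≤ 𝒜.shatterer.card := 𝒜.card_le_card_shatterer
    _ ≤ ∑ i ∈ Finset.range (d + 1), (X.powersetCard i).card :=
      (Finset.card_le_card hshat).trans Finset.card_biUnion_le
    _ ≤ ∑ i ∈ Finset.range (d + 1), n ^ d := by
      refine Finset.sum_le_sum fun i hi => ?_
      rw [Finset.card_powersetCard]
      calc X.card.choose i ≤ X.card ^ i := Nat.choose_le_pow _ _
        _ ≤ n ^ i := Nat.pow_le_pow_left hXcard i
        _ ≤ n ^ d := Nat.pow_le_pow_right hn (by simpa [Nat.lt_succ_iff] using hi)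
    _ = (d + 1) * n ^ d := by simp
  refine ⟨𝒜.image fun T => loss fun x => decide (x ∈ T), Finset.card_image_le.trans hcard, ?_⟩
  rintro _ ⟨h, hh, rfl⟩
  refine ⟨_, Finset.mem_image_of_mem _ (Finset.mem_filter.2
    ⟨Finset.mem_powerset.2 (Finset.filter_subset (fun x => h x = true) X), h, hh, rfl⟩), ?_⟩
  intro z hz
  have hzX : z.1 ∈ X := by
    rw [hX, List.mem_toFinset]
    exact List.mem_map_of_mem hz
  simp [loss, hzX]

/-! ### A computable empirical risk minimizer -/

theorem Computable.list_map_self {α β : Type*} [Primcodable α] [Primcodable β] {f : α → β}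
    (hf : Computable f) : Computable (List.map f) := by
  have hstep : Computable₂ fun (L : List α) (p : ℕ × List β) =>
      Option.casesOn (motive := fun _ => List β) (L[p.1]?) p.2 (fun a => p.2 ++ [f a]) :=
    Computable.option_casesOn
      (Computable.list_getElem?.comp Computable.fst (Computable.fst.comp Computable.snd))
      (Computable.snd.comp Computable.snd)
      (Computable.list_concat.comp
        (Computable.snd.comp (Computable.snd.comp Computable.fst))
        (hf.comp Computable.snd)).to₂
  refine (Computable.nat_rec Computable.list_length (Computable.const []) hstep).of_eq
    fun L => ?_
  suffices h : ∀ n, Nat.rec (motive := fun _ => List β) [] (fun i acc =>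
      Option.casesOn (motive := fun _ => List β) (L[i]?) acc (fun a => acc ++ [f a])) n =
      (L.take n).map f by simpa using h L.length
  intro n
  induction n with
  | zero => rfl
  | succ n ih =>
    simp only [ih, List.take_add_one, List.map_append]
    cases L[n]? <;> simp

/-- All increasing lists with entries below `n`. -/
def incLists : ℕ → List (List ℕ)
  | 0 => [[]]
  | n + 1 => incLists n ++ (incLists n).map (· ++ [n])

theorem mem_incLists {n : ℕ} {xs : List ℕ} :
    xs ∈ incLists n ↔ xs.Pairwise (· < ·) ∧ ∀ x ∈ xs, x < n := by
  induction n generalizing xs with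
  | zero =>
    obtain _ | ⟨x, xs⟩ := xs
    · simp [incLists]
    · simp only [incLists, List.mem_singleton, reduceCtorEq, false_iff]
      exact fun h => absurd (h.2 x List.mem_cons_self) (Nat.not_lt_zero _)
  | succ n ih =>
    simp only [incLists, List.mem_append, List.mem_map, ih]
    constructor
    · rintro (⟨h, hlt⟩ | ⟨ys, ⟨h, hlt⟩, rfl⟩)
      · exact ⟨h, fun x hx => (hlt x hx).trans n.lt_succ_self⟩
      · refine ⟨List.pairwise_append.2 ⟨h, by simp, by simpa using hlt⟩, fun x hx => ?_⟩
        rcases List.mem_append.1 hx with hx | hx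
        · exact (hlt x hx).trans n.lt_succ_self
        · simp_all
    · rintro ⟨h, hlt⟩
      rcases List.eq_nil_or_concat xs with rfl | ⟨ys, y, rfl⟩
      · simp
      · rw [List.concat_eq_append] at *
        obtain ⟨h1, -, h2⟩ := List.pairwise_append.1 h
        have hy : y < n + 1 := hlt y (by simp)
        have h3 : ∀ x ∈ ys, x < y := fun x hx => h2 x hx y (by simp)
        by_cases hyn : y = n
        · subst hyn
          exact .inr ⟨ys, ⟨h1, h3⟩, rfl⟩
        · refine .inl ⟨h, fun x hx => ?_⟩
          rcases List.mem_append.1 hx with hx | hx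
          · have := h3 x hx
            omega
          · rw [List.mem_singleton.1 hx]
            omega

theorem primrec_incLists : Primrec incLists := by
  have hstep : Primrec₂ fun (_ : ℕ) (p : ℕ × List (List ℕ)) =>
      p.2 ++ p.2.map (· ++ [p.1]) :=
    Primrec.list_append.comp (Primrec.snd.comp Primrec.snd)
      (Primrec.list_map (Primrec.snd.comp Primrec.snd)
        (Primrec.list_concat.comp Primrec.snd
          (Primrec.fst.comp (Primrec.snd.comp Primrec.fst))).to₂)
  refine (Primrec.nat_rec' Primrec.id (Primrec.const [[]]) hstep).of_eq fun n => ?_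
  induction n with
  | zero => rfl
  | succ n ih => simp only [id, incLists] at ih ⊢; rw [ih]

/-- All Boolean lists of length `n`. -/
def bitLists : ℕ → List (List Bool)
  | 0 => [[]]
  | n + 1 => (bitLists n).map (List.cons true) ++ (bitLists n).map (List.cons false)

theorem mem_bitLists {n : ℕ} {l : List Bool} : l ∈ bitLists n ↔ l.length = n := by
  induction n generalizing l with
  | zero => simp [bitLists]
  | succ n ih =>
    obtain _ | ⟨b, l⟩ := l
    · simp [bitLists]
    · cases b <;> simp [bitLists, ih]

theorem primrec_bitLists : Primrec bitLists := by
  have hcons : ∀ b : Bool, Primrec₂ fun (_ : ℕ) (p : ℕ × List (List Bool)) =>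
      p.2.map (List.cons b) := fun b =>
    Primrec.list_map (Primrec.snd.comp Primrec.snd)
      (Primrec.list_cons.comp (Primrec.const b) Primrec.snd).to₂
  refine (Primrec.nat_rec' Primrec.id (Primrec.const [[]])
    (Primrec.list_append.comp₂ (hcons true) (hcons false))).of_eq fun n => ?_
  induction n with
  | zero => rfl
  | succ n ih => simp only [id, bitLists] at ih ⊢; rw [ih]

/-- The increasing lists below `M`, each with the pattern that is forbidden on it. -/
def patternTable (k : ℕ) (w : List ℕ → List Bool) (M : ℕ) : List (List ℕ × List Bool) :=
  (incLists M).map fun zs => (zs, w (zs.take (k + 1)) ++ [true])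

theorem computable_patternTable {k : ℕ} {w : List ℕ → List Bool} (hw : Computable w) :
    Computable (patternTable k w) := by
  have h : Computable fun zs : List ℕ => (zs, w (zs.take (k + 1)) ++ [true]) :=
    Computable.id.pair (Computable.list_concat.comp
      (hw.comp (Primrec.list_take.comp (Primrec.const (k + 1)) Primrec.id).to_comp)
      (Computable.const true))
  exact (Computable.list_map_self h).comp primrec_incLists.to_comp

/-- `bitHyp l` realizes none of the patterns of length `k + 2` in the table. -/
def Admissible (k : ℕ) (P : List (List ℕ × List Bool)) (l : List Bool) : Prop :=
  ∀ q ∈ P, ¬ (q.1.length = k + 2 ∧ q.1.map (bitHyp l) = q.2)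

instance (k : ℕ) (P : List (List ℕ × List Bool)) (l : List Bool) :
    Decidable (Admissible k P l) :=
  inferInstanceAs (Decidable (∀ q ∈ P, ¬ (q.1.length = k + 2 ∧ q.1.map (bitHyp l) = q.2)))

theorem admissible_iff {k : ℕ} {w : List ℕ → List Bool} {l : List Bool} :
    Admissible k (patternTable k w l.length) l ↔ bitHyp l ∈ avoidClass k w := by
  constructor
  · intro h zs hlen hzs heq
    exact h (zs, w (zs.take (k + 1)) ++ [true])
      (List.mem_map.2 ⟨zs, mem_incLists.2 ⟨hzs, lt_length_of_bad hzs heq⟩, rfl⟩) ⟨hlen, heq⟩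
  · rintro h q hq ⟨hlen, heq⟩
    obtain ⟨zs, hzs, rfl⟩ := List.mem_map.1 hq
    exact h zs hlen (mem_incLists.1 hzs).1 heq

theorem primrec_bitHyp : Primrec₂ bitHyp := Primrec.list_getD false

theorem primrec_admissible (k : ℕ) :
    PrimrecRel (Admissible k) := by
  have h : PrimrecRel fun (q : List ℕ × List Bool) (l : List Bool) =>
      ¬ (q.1.length = k + 2 ∧ q.1.map (bitHyp l) = q.2) := by
    refine PrimrecPred.not (PrimrecPred.and ?_ ?_)
    · exact Primrec.eq.comp (Primrec.list_length.comp (Primrec.fst.comp Primrec.fst))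
        (Primrec.const (k + 2))
    · exact Primrec.eq.comp (Primrec.list_map (Primrec.fst.comp Primrec.fst)
        (primrec_bitHyp.comp (Primrec.snd.comp Primrec.fst) Primrec.snd).to₂)
        (Primrec.snd.comp Primrec.fst)
  exact h.forall_mem_list

/-- The number of errors of `bitHyp l` on `S`. -/
def errCount (S : Sample) (l : List Bool) : ℕ := S.countP (loss (bitHyp l))

theorem primrec_errCount : Primrec₂ errCount := by
  have h : PrimrecRel fun (p : ℕ × Bool) (l : List Bool) => bitHyp l p.1 ≠ p.2 :=
    PrimrecPred.not (Primrec.eq.comp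
      (primrec_bitHyp.comp Primrec.snd (Primrec.fst.comp Primrec.fst))
      (Primrec.snd.comp Primrec.fst))
  refine (Primrec.list_length.comp₂ h.listFilter).of_eq fun S l => ?_
  rw [errCount, List.countP_eq_length_filter]
  congr 2
  ext p
  cases h : bitHyp l p.1 <;> cases h' : p.2 <;> simp [loss, h, h']

/-- A bound strictly above all points of the sample. -/
def ptBound (S : Sample) : ℕ := S.foldr (fun p b => max (p.1 + 1) b) 0

theorem lt_ptBound {S : Sample} {p : ℕ × Bool} (hp : p ∈ S) : p.1 < ptBound S := by
  induction S with
  | nil => simp at hp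
  | cons q S ih =>
    simp only [ptBound, List.foldr_cons, lt_max_iff] at ih ⊢
    rcases List.mem_cons.1 hp with rfl | hp
    · exact .inl p.1.lt_succ_self
    · exact .inr (ih hp)

theorem primrec_ptBound : Primrec ptBound :=
  Primrec.list_foldr Primrec.id (Primrec.const 0)
    (Primrec.nat_max.comp (Primrec.succ.comp (Primrec.fst.comp (Primrec.fst.comp Primrec.snd)))
      (Primrec.snd.comp Primrec.snd)).to₂

/-- One step of the search for a minimizer: keep the better of `b` and `l`, provided that `l` is
admissible. -/
def better (k : ℕ) (a : Sample × List (List ℕ × List Bool)) (b l : List Bool) : List Bool :=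
  if Admissible k a.2 l ∧ errCount a.1 l < errCount a.1 b then l else b

/-- The best admissible hypothesis supported on `[0, ptBound S)`. -/
def search (k : ℕ) (a : Sample × List (List ℕ × List Bool)) : List Bool :=
  (bitLists (ptBound a.1)).foldl (better k a) []

theorem primrec_search (k : ℕ) : Primrec (search k) := by
  have hstep : Primrec fun x : (Sample × List (List ℕ × List Bool)) × List Bool × List Bool =>
      better k x.1 x.2.1 x.2.2 := by
    refine Primrec.ite (PrimrecPred.and ?_ ?_) ?_ ?_
    · exact (primrec_admissible k).comp (Primrec.snd.comp Primrec.fst)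
        (Primrec.snd.comp Primrec.snd)
    · exact Primrec.nat_lt.comp
        (primrec_errCount.comp (Primrec.fst.comp Primrec.fst) (Primrec.snd.comp Primrec.snd))
        (primrec_errCount.comp (Primrec.fst.comp Primrec.fst) (Primrec.fst.comp Primrec.snd))
    · exact Primrec.snd.comp Primrec.snd
    · exact Primrec.fst.comp Primrec.snd
  exact Primrec.list_foldl (primrec_bitLists.comp (primrec_ptBound.comp Primrec.fst))
    (Primrec.const []) hstep.to₂

theorem foldl_better_mem (k : ℕ) (a : Sample × List (List ℕ × List Bool))
    (Ls : List (List Bool)) (b : List Bool) :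
    Ls.foldl (better k a) b = b ∨
      (Ls.foldl (better k a) b ∈ Ls ∧ Admissible k a.2 (Ls.foldl (better k a) b)) := by
  induction Ls generalizing b with
  | nil => exact .inl rfl
  | cons l Ls ih =>
    rw [List.foldl_cons]
    rcases ih (better k a b l) with h | ⟨h1, h2⟩
    · rw [h]
      unfold better
      split_ifs with hc
      · exact .inr ⟨List.mem_cons_self, hc.1⟩
      · exact .inl rfl
    · exact .inr ⟨List.mem_cons_of_mem _ h1, h2⟩

theorem foldl_better_le (k : ℕ) (a : Sample × List (List ℕ × List Bool))
    (Ls : List (List Bool)) (b : List Bool) :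
    errCount a.1 (Ls.foldl (better k a) b) ≤ errCount a.1 b ∧
      ∀ l ∈ Ls, Admissible k a.2 l →
        errCount a.1 (Ls.foldl (better k a) b) ≤ errCount a.1 l := by
  induction Ls generalizing b with
  | nil => simp
  | cons l Ls ih =>
    rw [List.foldl_cons]
    obtain ⟨h1, h2⟩ := ih (better k a b l)
    have hb : errCount a.1 (better k a b l) ≤ errCount a.1 b ∧
        (Admissible k a.2 l → errCount a.1 (better k a b l) ≤ errCount a.1 l) := by
      unfold better
      split_ifs with hc
      · exact ⟨hc.2.le, fun _ => le_rfl⟩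
      · exact ⟨le_rfl, fun h => not_lt.1 fun hlt => hc ⟨h, hlt⟩⟩
    refine ⟨h1.trans hb.1, fun l' hl' hadm => ?_⟩
    rcases List.mem_cons.1 hl' with rfl | hl'
    · exact h1.trans (hb.2 hadm)
    · exact h2 l' hl' hadm

/-- Empirical risk minimization over the hypotheses of `avoidClass k w` supported below
`ptBound S`. -/
def ermLearner (k : ℕ) (w : List ℕ → List Bool) : Learner := fun S =>
  bitHyp (search k (S, patternTable k w (ptBound S)))

theorem ermLearner_computable {k : ℕ} {w : List ℕ → List Bool} (hw : Computable w) :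
    ComputableLearner (ermLearner k w) := by
  have h : Computable fun S : Sample => search k (S, patternTable k w (ptBound S)) :=
    (primrec_search k).to_comp.comp (Computable.id.pair
      ((computable_patternTable hw).comp primrec_ptBound.to_comp))
  exact primrec_bitHyp.to_comp.comp (h.comp Computable.fst) Computable.snd

theorem ermLearner_proper (k : ℕ) (w : List ℕ → List Bool) :
    ProperFor (ermLearner k w) (avoidClass k w) := by
  intro S
  rcases foldl_better_mem k (S, patternTable k w (ptBound S)) (bitLists (ptBound S)) []
    with h | ⟨h1, h2⟩
  · rw [ermLearner, search, h]
    intro zs hlen hzs heq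
    have := lt_length_of_bad hzs heq
    obtain _ | ⟨z, zs⟩ := zs
    · simp at hlen
    · simpa using this z (by simp)
  · refine admissible_iff.1 ?_
    have hl := mem_bitLists.1 h1
    rw [search, hl]
    exact h2

theorem ermLearner_countP_le (k : ℕ) (w : List ℕ → List Bool) (S : Sample) {h : Hyp}
    (hh : h ∈ avoidClass k w) :
    S.countP (loss (ermLearner k w S)) ≤ S.countP (loss h) := by
  set l := (List.range (ptBound S)).map h with hl
  have hlen : l.length = ptBound S := by simp [hl]
  have hadm : Admissible k (patternTable k w (ptBound S)) l := by
    rw [← hlen]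
    exact admissible_iff.2 (truncate_mem hh _)
  refine ((foldl_better_le k (S, patternTable k w (ptBound S)) _ []).2 l
    (mem_bitLists.2 hlen) hadm).trans (le_of_eq (List.countP_congr fun p hp => ?_))
  simp [loss, hl, bitHyp_map_range (lt_ptBound hp)]

/-! ### Sample complexity -/

/-- A sample size that suffices for accuracy and confidence `1 / n` in VC dimension `d`. -/
def sizeBound (d n : ℕ) : ℕ :=
  ((d + 2) * 2 ^ d * (d + 1).factorial * 32 ^ (d + 1)) * n ^ (2 * d + 3)

theorem computable_sizeBound (d : ℕ) : Computable (sizeBound d) := by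
  have hpow : ∀ e : ℕ, Primrec fun n : ℕ => n ^ e := by
    intro e
    induction e with
    | zero => exact (Primrec.const 1).of_eq fun n => (pow_zero n).symm
    | succ e ih => exact (Primrec.nat_mul.comp ih Primrec.id).of_eq fun n => (pow_succ n e).symm
  exact (Primrec.nat_mul.comp (Primrec.const _) (hpow _)).to_comp

/-- The exponential decay beats the polynomial number of traces, by
`exp (-x) ≤ (d + 1)! / x ^ (d + 1)`. -/
theorem tail_le {d n m : ℕ} (hn : 1 ≤ n) (hm : sizeBound d n ≤ m) :
    ((d + 2) * (2 * m) ^ d : ℝ) * Real.exp (-(m * (1 / (4 * n)) ^ 2 / 2)) ≤ 1 / n := by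
  have hn0 : (0 : ℝ) < n := by exact_mod_cast hn
  have hm' : ((d + 2) * 2 ^ d * (d + 1).factorial * 32 ^ (d + 1) * n ^ (2 * d + 3) : ℝ) ≤ m := by
    exact_mod_cast hm
  have hm0 : (0 : ℝ) < m := lt_of_lt_of_le (by positivity) hm'
  have hx : (m * (1 / (4 * n)) ^ 2 / 2 : ℝ) = m / (32 * n ^ 2) := by
    field_simp
    norm_num
  have hexp := Real.pow_div_factorial_le_exp (x := m / (32 * n ^ 2)) (by positivity) (d + 1)
  have hinv : Real.exp (-(m / (32 * n ^ 2) : ℝ)) ≤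
      (d + 1).factorial * (32 * n ^ 2) ^ (d + 1) / m ^ (d + 1) := by
    rw [Real.exp_neg]
    refine (inv_anti₀ (by positivity) hexp).trans (le_of_eq ?_)
    rw [div_pow]
    field_simp
  rw [hx]
  calc ((d + 2) * (2 * m) ^ d : ℝ) * Real.exp (-(m / (32 * n ^ 2)))
      ≤ ((d + 2) * (2 * m) ^ d) *
          ((d + 1).factorial * (32 * n ^ 2) ^ (d + 1) / m ^ (d + 1)) := by gcongr
    _ = ((d + 2) * 2 ^ d * (d + 1).factorial * 32 ^ (d + 1) * n ^ (2 * d + 3)) / (n * m) := by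
      field_simp
      ring
    _ ≤ m / (n * m) := by gcongr
    _ = 1 / n := by field_simp

theorem genError_eq (D : PMF (ℕ × Bool)) (h : Hyp) :
    genError D h = ENNReal.ofReal (risk D (loss h)) := by
  rw [risk, ENNReal.ofReal_toReal (prob_ne_top _ _), genError]
  simp [loss]

/-- Outside the two deviation events, an empirical risk minimizer is nearly optimal. -/
theorem risk_erm_le {m : ℕ} (hm : 0 < m) {ε : ℝ} {D : PMF (ℕ × Bool)} {H : Set Hyp}
    {S : Sample} (hS : S.length = m) {h h' : Hyp} (hh : h ∈ H)
    (hle : S.countP (loss h) ≤ S.countP (loss h'))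
    (h1 : S ∉ devEvent D (loss '' H) m ε) (h2 : S ∉ devEvent D {fun z => !loss h' z} m ε) :
    risk D (loss h) ≤ risk D (loss h') + 2 * ε := by
  have e1 : m * risk D (loss h) < S.countP (loss h) + m * ε := by
    by_contra! hc
    exact h1 ⟨_, ⟨h, hh, rfl⟩, hc⟩
  have e2 : m * (1 - risk D (loss h')) < S.countP (fun z => !loss h' z) + m * ε := by
    by_contra! hc
    exact h2 ⟨_, rfl, by rwa [risk_not]⟩
  have e3 : (S.countP (loss h') + S.countP (fun z => !loss h' z) : ℝ) = m := by
    rw [← hS, List.length_eq_countP_add_countP (loss h')]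
    simp
  have e4 : (S.countP (loss h) : ℝ) ≤ S.countP (loss h') := by exact_mod_cast hle
  have hm' : (0 : ℝ) < m := by exact_mod_cast hm
  have : m * risk D (loss h) ≤ m * (risk D (loss h') + 2 * ε) := by nlinarith
  exact le_of_mul_le_mul_left this hm'

/-- In a class of finite VC dimension, empirical risk minimization has sample complexity at most
`sizeBound`. -/
theorem pac_of_erm {H : Set Hyp} {d : ℕ} (hvc : VCDimAtMost H d) {A : Learner}
    (hA : ProperFor A H) (herm : ∀ S : Sample, ∀ h ∈ H, S.countP (loss (A S)) ≤ S.countP (loss h))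
    {n m : ℕ} (hm : sizeBound d n ≤ m) : PACCondition A H n m := by
  intro D
  rcases Nat.eq_zero_or_pos n with rfl | hn
  · simp
  have hn0 : (0 : ℝ) < n := by exact_mod_cast hn
  have hm0 : 0 < m := lt_of_lt_of_le (by unfold sizeBound; positivity) hm
  set ε : ℝ := 1 / (4 * n) with hε
  have hε0 : 0 < ε := by positivity
  set I := ⨅ h ∈ H, genError D h with hI
  have hItop : I ≠ ⊤ := ne_top_of_le_ne_top (prob_ne_top _ _) (iInf₂_le (A []) (hA []))
  -- The infimum need not be attained; `h'` is optimal up to `ε`.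
  obtain ⟨h', hh', hlt⟩ : ∃ h' ∈ H, genError D h' < I + ENNReal.ofReal ε := by
    have := ENNReal.lt_add_right hItop (ENNReal.ofReal_pos.2 hε0).ne'
    rw [hI] at this
    simpa only [iInf_lt_iff, exists_prop] using this
  set B₁ := devEvent D (loss '' H) m ε
  set B₂ := devEvent D {fun z => !loss h' z} m ε
  have hN₁ : TraceBound (loss '' H) (2 * m) ((d + 1) * (2 * m) ^ d) :=
    traceBound_loss hvc (by omega)
  have hN₂ : TraceBound ({fun z => !loss h' z} : Set (ℕ × Bool → Bool)) (2 * m) 1 :=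
    fun P _ => ⟨{fun z => !loss h' z}, by simp, by simp⟩
  have hinv : ((n : ℝ≥0∞))⁻¹ = ENNReal.ofReal (1 / n) := by
    rw [one_div, ENNReal.ofReal_inv_of_pos hn0, ENNReal.ofReal_natCast]
  have hbad : iidExp D m (B₁.indicator 1) + iidExp D m (B₂.indicator 1) ≤ ((n : ℝ≥0∞))⁻¹ := by
    refine (add_le_add (iidExp_devEvent_le D _ m _ ε hε0.le hN₁)
      (iidExp_devEvent_le D _ m _ ε hε0.le hN₂)).trans ?_
    rw [← add_mul, ← Nat.cast_add, ← ENNReal.ofReal_natCast,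
      ← ENNReal.ofReal_mul (Nat.cast_nonneg _), hinv]
    refine ENNReal.ofReal_le_ofReal (le_trans ?_ (tail_le hn hm))
    refine mul_le_mul_of_nonneg_right ?_ (Real.exp_nonneg _)
    have h1 : 1 ≤ (2 * m) ^ d := Nat.one_le_pow _ _ (by omega)
    have h2 : (d + 1) * (2 * m) ^ d + 1 ≤ (d + 2) * (2 * m) ^ d := by linarith
    exact_mod_cast h2
  rw [samplePr_eq_iidExp, tsub_le_iff_right]
  refine le_trans ?_ (add_le_add_right hbad _)
  rw [← iidExp_add, ← iidExp_add, ← iidExp_one D m]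
  refine iidExp_mono _ _ _ _ fun S hS => ?_
  by_cases h1 : S ∈ B₁
  · rw [Set.indicator_of_mem h1]
    exact le_add_left (le_add_right le_rfl)
  by_cases h2 : S ∈ B₂
  · rw [Set.indicator_of_mem h2]
    exact le_add_left (le_add_left le_rfl)
  refine le_add_right ?_
  rw [Set.indicator_of_mem]
  · rfl
  have hr := risk_erm_le hm0 hS (hA S) (herm S h' hh') h1 h2
  change genError D (A S) ≤ I + ((n : ℝ≥0∞))⁻¹
  calc genError D (A S) ≤ ENNReal.ofReal (risk D (loss h') + 2 * ε) := by
        rw [genError_eq]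
        exact ENNReal.ofReal_le_ofReal hr
    _ = genError D h' + ENNReal.ofReal (2 * ε) := by
        rw [ENNReal.ofReal_add (risk_nonneg _ _) (by positivity), ← genError_eq]
    _ ≤ I + ENNReal.ofReal ε + ENNReal.ofReal (2 * ε) := by gcongr
    _ ≤ I + ((n : ℝ≥0∞))⁻¹ := by
        rw [add_assoc, ← ENNReal.ofReal_add hε0.le (by positivity), hinv]
        gcongr
        rw [hε]
        field_simp
        norm_num

/-- If `H` admits a computable `k`-witness of VC dimension for some
`k ∈ ℕ`, then `H` is contained in some properly SCPAC learnable class. -/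
theorem subset_properSCPAC_of_computable_witness (H : Set Hyp) (k : ℕ)
    (w : List ℕ → List Bool) (hw : Computable w) (hwit : IsKWitness k w H) :
    ∃ Hhat : Set Hyp, H ⊆ Hhat ∧ ProperlySCPACLearnable Hhat := by
  have hpac : ∀ n, ∀ m ≥ sizeBound (k + 1) n,
      PACCondition (ermLearner k w) (avoidClass k w) n m := fun n m hm =>
    pac_of_erm (avoidClass_vcDim hwit) (ermLearner_proper k w)
      (fun S _ hh => ermLearner_countP_le k w S hh) hm
  exact ⟨avoidClass k w, subset_avoidClass hwit, ermLearner k w, ermLearner_computable hw,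
    ermLearner_proper k w, fun n => ⟨_, hpac n⟩, sizeBound (k + 1), computable_sizeBound _,
    fun n => Nat.sInf_le (hpac n)⟩
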